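/- There exist two 4×4 pairwise comparison matrices A⁽¹⁾ and A⁽²⁾, positive vectors w⁽¹⁾, w⁽²⁾, u and real numbers λ⁽¹⁾, λ⁽²⁾, μ with A⁽¹⁾·w⁽¹⁾ = λ⁽¹⁾·w⁽¹⁾, A⁽²⁾·w⁽²⁾ = λ⁽²⁾·w⁽²⁾ and (A⁽¹⁾ ⊕ A⁽²⁾)·u = μ·u, such that w⁽¹⁾_2 > w⁽¹⁾_1, w⁽²⁾_2 > w⁽²⁾_1, yet u_2 = u_1. Hence the Eigenvector Method violates aggregation invariance. -/

import Mathlib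

/-- A pairwise comparison matrix: all entries positive and `A j i = 1 / A i j`. -/
def IsPCM {n : ℕ} (A : Matrix (Fin n) (Fin n) ℝ) : Prop :=
  (∀ i j, 0 < A i j) ∧ ∀ i j, A j i = 1 / A i j

/-- The aggregate (entrywise geometric mean) of two pairwise comparison matrices. -/
noncomputable def agg2 {n : ℕ} (A B : Matrix (Fin n) (Fin n) ℝ) :
    Matrix (Fin n) (Fin n) ℝ :=
  Matrix.of fun i j => Real.sqrt (A i j * B i j)

/-!
For a pairwise comparison matrix `A`, reciprocity makes the aggregate of `A` and `Aᵀ` the all-ones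
matrix, whose Perron eigenvector is constant: every two alternatives are tied. Replacing `A` by `Aᵀ`
reverses all comparisons, but the left Perron eigenvector of an inconsistent `A` need not order the
alternatives oppositely to the right one. So `A` and `Aᵀ` violate aggregation invariance as soon
as both eigenvectors of `A` rank alternative 2 strictly above alternative 1.
-/

open Matrix

theorem IsPCM.transpose {n : ℕ} {A : Matrix (Fin n) (Fin n) ℝ} (hA : IsPCM A) : IsPCM Aᵀ :=
  ⟨fun i j => hA.1 j i, fun i j => hA.2 j i⟩

theorem IsPCM.agg2_transpose {n : ℕ} {A : Matrix (Fin n) (Fin n) ℝ} (hA : IsPCM A) :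
    agg2 A Aᵀ = of fun _ _ => 1 := by
  ext i j
  have reciprocity : A i j * A j i = 1 := by
    rw [hA.2 i j, mul_one_div_cancel (hA.1 i j).ne']
  simp only [agg2, of_apply, transpose_apply, reciprocity, Real.sqrt_one]

theorem IsPCM.agg2_transpose_mulVec_one {n : ℕ} {A : Matrix (Fin n) (Fin n) ℝ} (hA : IsPCM A) :
    agg2 A Aᵀ *ᵥ 1 = (n : ℝ) • 1 := by
  ext i
  simp [hA.agg2_transpose, mulVec, dotProduct]

/-- A pairwise comparison matrix, with entries from Saaty's scale `1/9, …, 1/2, 1, 2, …, 9`, whose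
left and right Perron eigenvectors both rank alternative 2 (index `1`) strictly above
alternative 1 (index `0`). Transposing it amounts to exchanging the last two alternatives, so the
left eigenvector is the right one with its last two coordinates exchanged. -/
noncomputable def concordantPCM : Matrix (Fin 4) (Fin 4) ℝ :=
  !![  1,   1, 1/2,   2;
       1,   1,   6, 1/6;
       2, 1/6,   1,   9;
     1/2,   6, 1/9,   1]

theorem isPCM_concordantPCM : IsPCM concordantPCM := by
  constructor <;> intro i j <;> fin_cases i <;> fin_cases j <;> norm_num [concordantPCM]

theorem concordantPCM_mulVec :
    concordantPCM *ᵥ ![17, 39, 45, 33] = (17 / 2 : ℝ) • ![17, 39, 45, 33] := by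
  ext i
  fin_cases i <;> norm_num [concordantPCM, mulVec, dotProduct, Fin.sum_univ_succ]

theorem vecMul_concordantPCM :
    ![17, 39, 33, 45] ᵥ* concordantPCM = (17 / 2 : ℝ) • ![17, 39, 33, 45] := by
  ext i
  fin_cases i <;> norm_num [concordantPCM, vecMul, dotProduct, Fin.sum_univ_succ]

/-- The Eigenvector Method violates aggregation invariance: there are two 4×4
pairwise comparison matrices in which alternative 2 is ranked strictly above
alternative 1 by the positive (Perron) eigenvectors, while the two alternatives
are tied in the aggregate. -/
theorem em_violates_aggregation_invariance :
    ∃ (A₁ A₂ : Matrix (Fin 4) (Fin 4) ℝ) (w₁ w₂ u : Fin 4 → ℝ)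
      (lam₁ lam₂ mu : ℝ),
      IsPCM A₁ ∧ IsPCM A₂ ∧
      (∀ i, 0 < w₁ i) ∧ (∀ i, 0 < w₂ i) ∧ (∀ i, 0 < u i) ∧
      A₁.mulVec w₁ = lam₁ • w₁ ∧ A₂.mulVec w₂ = lam₂ • w₂ ∧
      (agg2 A₁ A₂).mulVec u = mu • u ∧
      w₁ 0 < w₁ 1 ∧ w₂ 0 < w₂ 1 ∧ u 0 = u 1 := by
  refine ⟨concordantPCM, concordantPCMᵀ, ![17, 39, 45, 33], ![17, 39, 33, 45], 1, 17 / 2, 17 / 2, _,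
    isPCM_concordantPCM, isPCM_concordantPCM.transpose, ?posRight, ?posLeft, fun _ => one_pos,
    concordantPCM_mulVec, (mulVec_transpose _ _).trans vecMul_concordantPCM,
    isPCM_concordantPCM.agg2_transpose_mulVec_one, ?ltRight, ?ltLeft, rfl⟩
  case posRight | posLeft => simp [Fin.forall_fin_succ]
  case ltRight | ltLeft => norm_num
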